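/- Let ψ be a continuous positive definite function on the d-torus T^d with Fourier representation ψ(x) = ∑_{n∈ℤ^d} A_ψ(n) e^{i xᵀn}, where A_ψ(n) ≥ 0, A_ψ(−n) = A_ψ(n) and ∑_{n∈ℤ^d} A_ψ(n) < ∞, and let k(x,y) = ψ((x − y) mod 2π). If k is characteristic to the set of all Borel probability measures on T^d and A_ψ(0) > 0, then k is c-universal. -/

import Mathlib

open MeasureTheory Filter Topology RealInnerProductSpace

/-- The character `x ↦ e^{i xᵀn}` on the `d`-torus `(ℝ/2πℤ)^d`, for a frequency
`n ∈ ℤ^d`; here `AddCircle.toCircle θ = e^{iθ}` on `ℝ/2πℤ`. -/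
noncomputable def torusChar {d : ℕ} (n : Fin d → ℤ)
    (x : Fin d → AddCircle (2 * Real.pi)) : ℂ :=
  ∏ j, (AddCircle.toCircle (x j) : ℂ) ^ (n j)

/-- The circumference of the circle `ℝ/2πℤ` is positive. -/
local instance fact_two_pi_pos : Fact (0 < 2 * Real.pi) := ⟨Real.two_pi_pos⟩

section TorusChar

variable {d : ℕ}

lemma continuous_torusChar (n : Fin d → ℤ) : Continuous (torusChar n) := by
  refine continuous_finsetProd _ fun j _ ↦ ?_
  refine Continuous.zpow₀ ?_ _ fun x ↦ Or.inl (Circle.coe_ne_zero _)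
  exact continuous_subtype_val.comp (AddCircle.continuous_toCircle.comp (continuous_apply j))

lemma torusChar_zero : torusChar (0 : Fin d → ℤ) = 1 := by
  ext x
  simp [torusChar]

lemma torusChar_apply_zero (n : Fin d → ℤ) : torusChar n 0 = 1 := by
  simp [torusChar]

lemma torusChar_add (m n : Fin d → ℤ) (x : Fin d → AddCircle (2 * Real.pi)) :
    torusChar (m + n) x = torusChar m x * torusChar n x := by
  simp only [torusChar, Pi.add_apply, ← Finset.prod_mul_distrib]
  exact Finset.prod_congr rfl fun j _ ↦ zpow_add₀ (Circle.coe_ne_zero _) _ _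

lemma torusChar_apply_add (n : Fin d → ℤ) (x y : Fin d → AddCircle (2 * Real.pi)) :
    torusChar n (x + y) = torusChar n x * torusChar n y := by
  simp only [torusChar, Pi.add_apply, ← Finset.prod_mul_distrib, AddCircle.toCircle_add,
    Circle.coe_mul, mul_zpow]

lemma torusChar_apply_neg (n : Fin d → ℤ) (x : Fin d → AddCircle (2 * Real.pi)) :
    torusChar n (-x) = torusChar (-n) x := by
  simp [torusChar, AddCircle.toCircle_neg]

lemma norm_torusChar (n : Fin d → ℤ) (x : Fin d → AddCircle (2 * Real.pi)) :
    ‖torusChar n x‖ = 1 := by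
  rw [torusChar, norm_prod]
  exact Finset.prod_eq_one fun j _ ↦ by rw [norm_zpow, Circle.norm_coe, one_zpow]

lemma star_torusChar (n : Fin d → ℤ) (x : Fin d → AddCircle (2 * Real.pi)) :
    star (torusChar n x) = torusChar (-n) x := by
  simp only [torusChar, star_prod, Pi.neg_apply, zpow_neg, ← inv_zpow, ← Circle.coe_inv,
    Circle.coe_inv_eq_conj, star_zpow₀, RCLike.star_def]

lemma torusChar_single (j : Fin d) (m : ℤ) (x : Fin d → AddCircle (2 * Real.pi)) :
    torusChar (Pi.single j m) x = (AddCircle.toCircle (x j) : ℂ) ^ m := by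
  rw [torusChar, Finset.prod_eq_single j]
  · simp
  · intro i _ hij
    simp [hij]
  · simp

lemma exists_torusChar_eq_neg_one {n : Fin d → ℤ} (hn : n ≠ 0) :
    ∃ a, torusChar n a = -1 := by
  obtain ⟨j, hj⟩ := Function.ne_iff.mp hn
  have hj' : (n j : ℂ) ≠ 0 := by exact_mod_cast hj
  refine ⟨Pi.single j ((Real.pi / n j : ℝ) : AddCircle (2 * Real.pi)), ?_⟩
  rw [torusChar, Finset.prod_eq_single j]
  · rw [Pi.single_eq_same, AddCircle.toCircle_apply_mk, div_self Real.two_pi_pos.ne', one_mul,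
      Circle.coe_exp, ← Complex.exp_int_mul, ← Complex.exp_pi_mul_I]
    congr 1
    push_cast
    field_simp
  · intro i _ hij
    simp [hij]
  · simp

/-- The linear span of the characters is dense in the continuous functions on the torus. -/
theorem span_torusChar_closure_eq_top :
    (Submodule.span ℂ (Set.range fun n : Fin d → ℤ ↦
      (⟨torusChar n, continuous_torusChar n⟩ : C(Fin d → AddCircle (2 * Real.pi), ℂ)))
      ).topologicalClosure = ⊤ := by
  set e : (Fin d → ℤ) → C(Fin d → AddCircle (2 * Real.pi), ℂ) :=
    fun n ↦ ⟨torusChar n, continuous_torusChar n⟩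
  let S : StarSubalgebra ℂ C(Fin d → AddCircle (2 * Real.pi), ℂ) :=
    { toSubalgebra := Algebra.adjoin ℂ (Set.range e)
      star_mem' := by
        change Algebra.adjoin ℂ (Set.range e) ≤ star (Algebra.adjoin ℂ (Set.range e))
        refine Algebra.adjoin_le ?_
        rintro _ ⟨n, rfl⟩
        refine Algebra.subset_adjoin ⟨-n, ?_⟩
        ext1 x
        exact (star_torusChar n x).symm }
  have hspan : S.toSubalgebra.toSubmodule = Submodule.span ℂ (Set.range e) := by
    apply Algebra.adjoin_eq_span_of_subset
    refine .trans (fun x ↦ Submonoid.closure_induction (fun _ ↦ id) ⟨0, ?_⟩ ?_)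
      Submodule.subset_span
    · ext z
      exact congrFun torusChar_zero z
    · rintro _ _ _ _ ⟨m, rfl⟩ ⟨n, rfl⟩
      refine ⟨m + n, ?_⟩
      ext z
      exact torusChar_add m n z
  have hsep : S.SeparatesPoints := by
    intro x y hxy
    obtain ⟨j, hj⟩ := Function.ne_iff.mp hxy
    refine ⟨_, ⟨e (Pi.single j 1), Algebra.subset_adjoin ⟨Pi.single j 1, rfl⟩, rfl⟩, ?_⟩
    change torusChar _ x ≠ torusChar _ y
    rw [torusChar_single, torusChar_single, zpow_one, zpow_one]
    exact fun h ↦ hj (AddCircle.injective_toCircle Real.two_pi_pos.ne' (Circle.ext h))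
  rw [← hspan]
  exact congr_arg (Subalgebra.toSubmodule <| StarSubalgebra.toSubalgebra ·)
    (ContinuousMap.starSubalgebra_topologicalClosure_eq_top_of_separatesPoints S hsep)

variable (μ : Measure (Fin d → AddCircle (2 * Real.pi))) [IsProbabilityMeasure μ]

lemma Continuous.integrable_torus {E : Type*} [NormedAddCommGroup E]
    {f : (Fin d → AddCircle (2 * Real.pi)) → E} (hf : Continuous f) : Integrable f μ :=
  hf.integrable_of_hasCompactSupport (HasCompactSupport.of_compactSpace f)

variable [μ.IsAddLeftInvariant]

lemma integral_torusChar (n : Fin d → ℤ) :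
    ∫ x, torusChar n x ∂μ = if n = 0 then 1 else 0 := by
  split_ifs with hn
  · simp [hn, torusChar_zero]
  · obtain ⟨a, ha⟩ := exists_torusChar_eq_neg_one hn
    have h := integral_add_left_eq_self (μ := μ) (torusChar n) a
    simp only [torusChar_apply_add, ha, neg_one_mul, integral_neg] at h
    linear_combination (-1 / 2 : ℂ) * h

/-- Convolution with `∑ A(n) e^{i xᵀn}` is diagonal in the basis of characters. -/
theorem integral_mul_torusChar {ψ : (Fin d → AddCircle (2 * Real.pi)) → ℝ}
    {A : (Fin d → ℤ) → ℝ} (hA0 : ∀ n, 0 ≤ A n) (hAsum : Summable A)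
    (hψA : ∀ x, (ψ x : ℂ) = ∑' n : Fin d → ℤ, (A n : ℂ) * torusChar n x)
    (n : Fin d → ℤ) (x : Fin d → AddCircle (2 * Real.pi)) :
    ∫ y, (ψ (x - y) : ℂ) * torusChar n y ∂μ = A n * torusChar n x := by
  have hterm : ∀ y, (ψ (x - y) : ℂ) * torusChar n y =
      ∑' m, (A m : ℂ) * torusChar m x * torusChar (n - m) y := by
    intro y
    rw [hψA, ← tsum_mul_right]
    refine tsum_congr fun m ↦ ?_
    rw [sub_eq_add_neg x, torusChar_apply_add, torusChar_apply_neg, sub_eq_add_neg n,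
      torusChar_add]
    ring
  have hnorm : ∀ m y, ‖(A m : ℂ) * torusChar m x * torusChar (n - m) y‖ = A m := by
    intro m y
    rw [norm_mul, norm_mul, norm_torusChar, norm_torusChar, Complex.norm_real,
      Real.norm_of_nonneg (hA0 m), mul_one, mul_one]
  simp_rw [hterm]
  rw [← integral_tsum_of_summable_integral_norm]
  · rw [tsum_eq_single n]
    · simp [integral_const_mul, integral_torusChar]
    · intro m hm
      rw [integral_const_mul, integral_torusChar, if_neg (sub_ne_zero.mpr hm.symm), mul_zero]
  · intro m
    exact (continuous_const.mul (continuous_torusChar _)).integrable_torus μ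
  · simpa only [hnorm, integral_const, probReal_univ, one_smul] using hAsum

end TorusChar

section Embedding

variable {X H : Type*} [MeasurableSpace X] [NormedAddCommGroup H] [InnerProductSpace ℝ H]

/-- If the mean embedding of probability measures is injective, then a function `u ≥ -1` with zero
integral and zero mean embedding vanishes: `μ` and its tilt by `1 + u` have the same embedding. -/
theorem ae_eq_zero_of_integral_smul_eq_zero [CompleteSpace H]
    (μ : Measure X) [IsProbabilityMeasure μ] {Φ : X → H}
    (hΦ : Integrable Φ μ)
    (hchar : ∀ P Q : Measure X, IsProbabilityMeasure P → IsProbabilityMeasure Q →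
      (∫ x, Φ x ∂P) = (∫ x, Φ x ∂Q) → P = Q)
    {u : X → ℝ} (hu : Measurable u) (hint : Integrable u μ) (hle : ∀ x, -1 ≤ u x)
    (huΦ : Integrable (fun x ↦ u x • Φ x) μ)
    (hu0 : ∫ x, u x ∂μ = 0) (huΦ0 : ∫ x, u x • Φ x ∂μ = 0) : u =ᵐ[μ] 0 := by
  have hnonneg : ∀ x, 0 ≤ 1 + u x := fun x ↦ by linarith [hle x]
  have hmeas : Measurable fun x ↦ ENNReal.ofReal (1 + u x) := by fun_prop
  have hlint : ∫⁻ x, ENNReal.ofReal (1 + u x) ∂μ = 1 := by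
    have hint' : Integrable (fun x ↦ 1 + u x) μ := (integrable_const 1).add hint
    rw [← ofReal_integral_eq_lintegral_ofReal hint' (ae_of_all _ hnonneg),
      integral_add (integrable_const 1) hint, hu0]
    simp
  have hprob : IsProbabilityMeasure (μ.withDensity fun x ↦ ENNReal.ofReal (1 + u x)) :=
    ⟨by rw [withDensity_apply _ MeasurableSet.univ, setLIntegral_univ, hlint]⟩
  have hembed : ∫ x, Φ x ∂μ = ∫ x, Φ x ∂μ.withDensity fun x ↦ ENNReal.ofReal (1 + u x) := by
    rw [integral_withDensity_eq_integral_toReal_smul hmeas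
      (ae_of_all _ fun _ ↦ ENNReal.ofReal_lt_top)]
    simp only [ENNReal.toReal_ofReal (hnonneg _), add_smul, one_smul]
    rw [integral_add hΦ huΦ, huΦ0, add_zero]
  have heq := hchar _ _ inferInstance hprob hembed
  have hone : μ.withDensity (fun x ↦ ENNReal.ofReal (1 + u x)) = μ.withDensity 1 := by
    rw [withDensity_one, ← heq]
  have hae := (withDensity_eq_iff hmeas.aemeasurable aemeasurable_const
    (by rw [hlint]; exact ENNReal.one_ne_top)).mp hone
  filter_upwards [hae] with x hx
  have h1 : (1 + u x) = 1 := by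
    rw [← ENNReal.toReal_ofReal (hnonneg x), hx]
    simp
  simpa using h1

/-- A feature map whose kernel is continuous and translation invariant is continuous. -/
lemma continuous_of_inner_eq_sub {G : Type*} [AddGroup G] [TopologicalSpace G]
    [ContinuousSub G] {ψ : G → ℝ} (hψ : Continuous ψ) {Φ : G → H}
    (hΦ : ∀ x y, ⟪Φ x, Φ y⟫ = ψ (x - y)) : Continuous Φ := by
  refine continuous_iff_continuousAt.mpr fun x ↦ tendsto_iff_norm_sub_tendsto_zero.mpr ?_
  have hnorm : ∀ y, ‖Φ y - Φ x‖ = √(2 * ψ 0 - 2 * ψ (y - x)) := by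
    intro y
    rw [← Real.sqrt_sq (norm_nonneg (Φ y - Φ x)), @norm_sub_sq_real, hΦ,
      ← real_inner_self_eq_norm_sq, ← real_inner_self_eq_norm_sq, hΦ, hΦ, sub_self, sub_self]
    congr 1
    ring
  simp only [hnorm]
  have hc : Continuous fun y ↦ √(2 * ψ 0 - 2 * ψ (y - x)) := by fun_prop
  simpa using hc.tendsto x

end Embedding

/-- Let `ψ` be a continuous positive definite function on the `d`-torus
with Fourier representation `ψ(x) = ∑_{n∈ℤ^d} A_ψ(n) e^{i xᵀn}` (`A_ψ(n) ≥ 0`,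
`A_ψ(−n) = A_ψ(n)`, `∑ A_ψ(n) < ∞`), and let `k(x,y) = ψ(x−y)` with RKHS `H`.  If `k` is
characteristic to the set of all Borel probability measures on the torus and
`A_ψ(0) > 0`, then `k` is c-universal. -/
theorem stmt15 {d : ℕ}
    (ψ : (Fin d → AddCircle (2 * Real.pi)) → ℝ) (hψcont : Continuous ψ)
    (A : (Fin d → ℤ) → ℝ)
    (hA0 : ∀ n, 0 ≤ A n) (hAsymm : ∀ n, A (-n) = A n) (hAsum : Summable A)
    (hψA : ∀ x, (ψ x : ℂ) = ∑' n : Fin d → ℤ, (A n : ℂ) * torusChar n x)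
    (k : (Fin d → AddCircle (2 * Real.pi)) → (Fin d → AddCircle (2 * Real.pi)) → ℝ)
    (hkψ : ∀ x y, k x y = ψ (x - y))
    {H : Type*} [NormedAddCommGroup H] [InnerProductSpace ℝ H] [CompleteSpace H]
    (T : H →ₗ[ℝ] ((Fin d → AddCircle (2 * Real.pi)) → ℝ)) (hT : Function.Injective T)
    (Φ : (Fin d → AddCircle (2 * Real.pi)) → H)
    (hk : ∀ x y, k x y = ⟪Φ x, Φ y⟫)
    (hrepro : ∀ (f : H) x, T f x = ⟪f, Φ x⟫)
    (hchar : ∀ P Q : Measure (Fin d → AddCircle (2 * Real.pi)),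
      IsProbabilityMeasure P → IsProbabilityMeasure Q →
      (∫ x, Φ x ∂P) = (∫ x, Φ x ∂Q) → P = Q)
    (hA0pos : 0 < A 0) :
    ∀ (g : C((Fin d → AddCircle (2 * Real.pi)), ℝ)) (ε : ℝ), 0 < ε →
      ∃ f : H, ∀ x, |T f x - g x| ≤ ε := by
  let μ : Measure (Fin d → AddCircle (2 * Real.pi)) := Measure.pi fun _ ↦ AddCircle.haarAddCircle
  have hΦψ : ∀ x y, ⟪Φ x, Φ y⟫ = ψ (x - y) := fun x y ↦ by rw [← hk, hkψ]
  have hΦ : Continuous Φ := continuous_of_inner_eq_sub hψcont hΦψ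
  have hΦu : ∀ {u : (Fin d → AddCircle (2 * Real.pi)) → ℝ}, Continuous u →
      Integrable (fun y ↦ u y • Φ y) μ := fun hu ↦ (hu.smul hΦ).integrable_torus μ
  have hTu : ∀ {u : (Fin d → AddCircle (2 * Real.pi)) → ℝ}, Continuous u → ∀ x,
      T (∫ y, u y • Φ y ∂μ) x = ∫ y, ψ (x - y) * u y ∂μ := by
    intro u hu x
    rw [hrepro, real_inner_comm, ← integral_inner (hΦu hu)]
    simp only [inner_smul_right, hΦψ, mul_comm]
  have hcint : ∀ n x, Integrable (fun y ↦ (ψ (x - y) : ℂ) * torusChar n y) μ := by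
    intro n x
    have := continuous_torusChar n
    exact Continuous.integrable_torus μ (by fun_prop)
  have hcos : ∀ n, Continuous fun y ↦ (torusChar (d := d) n y).re :=
    fun n ↦ Complex.continuous_re.comp (continuous_torusChar n)
  have hsin : ∀ n, Continuous fun y ↦ (torusChar (d := d) n y).im :=
    fun n ↦ Complex.continuous_im.comp (continuous_torusChar n)
  have hTcos : ∀ n x, T (∫ y, (torusChar n y).re • Φ y ∂μ) x = A n * (torusChar n x).re := by
    intro n x
    rw [hTu (hcos n), ← Complex.re_ofReal_mul, ← integral_mul_torusChar μ hA0 hAsum hψA]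
    simpa using integral_re (hcint n x)
  have hTsin : ∀ n x, T (∫ y, (torusChar n y).im • Φ y ∂μ) x = A n * (torusChar n x).im := by
    intro n x
    rw [hTu (hsin n), ← Complex.im_ofReal_mul, ← integral_mul_torusChar μ hA0 hAsum hψA]
    simpa using integral_im (hcint n x)
  have hApos : ∀ n, A n ≠ 0 := by
    intro n hn
    have hn0 : n ≠ 0 := by
      rintro rfl
      exact hA0pos.ne' hn
    have hint0 : ∫ y, (torusChar n y).re ∂μ = 0 := by
      have h := integral_re ((continuous_torusChar n).integrable_torus μ)
      rw [integral_torusChar, if_neg hn0] at h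
      simpa using h
    have hzero : ∫ y, (torusChar n y).re • Φ y ∂μ = 0 := by
      apply hT
      ext x
      rw [hTcos, hn, zero_mul, map_zero, Pi.zero_apply]
    have hae := ae_eq_zero_of_integral_smul_eq_zero μ (hΦ.integrable_torus μ) hchar
      (hcos n).measurable ((hcos n).integrable_torus μ)
      (fun x ↦ (abs_le.mp ((Complex.abs_re_le_norm _).trans (norm_torusChar n x).le)).1)
      (hΦu (hcos n)) hint0 hzero
    have heq := congrFun ((Continuous.ae_eq_iff_eq μ (hcos n) continuous_zero).mp hae) 0
    simp [torusChar_apply_zero] at heq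
  have hrange : ∀ p ∈ Submodule.span ℂ (Set.range fun n : Fin d → ℤ ↦
      (⟨torusChar n, continuous_torusChar n⟩ : C(Fin d → AddCircle (2 * Real.pi), ℂ))),
      ∃ f h : H, ∀ x, T f x = (p x).re ∧ T h x = (p x).im := by
    intro p hp
    induction hp using Submodule.span_induction with
    | mem p hp =>
      obtain ⟨n, rfl⟩ := hp
      refine ⟨(A n)⁻¹ • ∫ y, (torusChar n y).re • Φ y ∂μ,
        (A n)⁻¹ • ∫ y, (torusChar n y).im • Φ y ∂μ, fun x ↦ ?_⟩
      simp [hTcos, hTsin, hApos n]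
    | zero => exact ⟨0, 0, by simp⟩
    | add p q _ _ hp hq =>
      obtain ⟨f, h, hfh⟩ := hp
      obtain ⟨f', h', hfh'⟩ := hq
      exact ⟨f + f', h + h', fun x ↦ by simp [hfh, hfh']⟩
    | smul c p _ hp =>
      obtain ⟨f, h, hfh⟩ := hp
      exact ⟨c.re • f - c.im • h, c.re • h + c.im • f, fun x ↦ by simp [hfh]⟩
  intro g ε hε
  let gc : C(Fin d → AddCircle (2 * Real.pi), ℂ) := ⟨fun x ↦ (g x : ℂ), by fun_prop⟩
  have hgc : gc ∈ (Submodule.span ℂ (Set.range fun n : Fin d → ℤ ↦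
      (⟨torusChar n, continuous_torusChar n⟩ : C(Fin d → AddCircle (2 * Real.pi), ℂ)))
      ).topologicalClosure := by
    rw [span_torusChar_closure_eq_top]
    trivial
  obtain ⟨p, hp, hpε⟩ := Metric.mem_closure_iff.mp hgc ε hε
  obtain ⟨f, _, hf⟩ := hrange p hp
  refine ⟨f, fun x ↦ ?_⟩
  have hre : T f x - g x = (p x - gc x).re := by simp [(hf x).1, gc]
  rw [hre]
  calc |(p x - gc x).re| ≤ ‖p x - gc x‖ := Complex.abs_re_le_norm _
    _ = dist (gc x) (p x) := by rw [dist_comm, dist_eq_norm]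
    _ ≤ dist gc p := ContinuousMap.dist_apply_le_dist x
    _ ≤ ε := hpε.le
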